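/- A permutation has rev-tier at most 2 if and only if it avoids each of the eleven permutations 24153, 24513, 24531, 42513, 42531, 231564, 261453, 523164, 562413, 562431, and 6723154; that is, these eleven permutations form the basis B_2 of the class of 3-reverse pass sortable permutations. -/

import Mathlib

/-!  Common definitions: permutation patterns, separated pairs, rev-tier. -/

/-- `π` contains the pattern `σ`. -/
def Pattern.Contains {n k : ℕ} (π : Equiv.Perm (Fin n)) (σ : Equiv.Perm (Fin k)) : Prop :=
  ∃ α : Fin k → Fin n, StrictMono α ∧ ∀ i j : Fin k, (π (α i) < π (α j) ↔ σ i < σ j)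

/-- `π` avoids the pattern `σ`. -/
def Pattern.Avoids {n k : ℕ} (π : Equiv.Perm (Fin n)) (σ : Equiv.Perm (Fin k)) : Prop :=
  ¬ Pattern.Contains π σ

/-- The pair of values `(a, a+1)` (0-indexed) is an up oriented separated pair in `σ`:
`a` precedes `a+1` and some value `> a+1` occurs strictly between them. -/
def UpSepPair {n : ℕ} (σ : Equiv.Perm (Fin n)) (a : Fin n) : Prop :=
  ∃ hb : (a : ℕ) + 1 < n,
    σ.symm a < σ.symm ⟨(a : ℕ) + 1, hb⟩ ∧
    ∃ p : Fin n, σ.symm a < p ∧ p < σ.symm ⟨(a : ℕ) + 1, hb⟩ ∧ (a : ℕ) + 1 < (σ p : ℕ)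

/-- The pair of values `(a, a+1)` (0-indexed) is a down oriented separated pair in `σ`. -/
def DownSepPair {n : ℕ} (σ : Equiv.Perm (Fin n)) (a : Fin n) : Prop :=
  ∃ hb : (a : ℕ) + 1 < n,
    σ.symm ⟨(a : ℕ) + 1, hb⟩ < σ.symm a ∧
    ∃ p : Fin n, σ.symm ⟨(a : ℕ) + 1, hb⟩ < p ∧ p < σ.symm a ∧ (a : ℕ) + 1 < (σ p : ℕ)

/-- `(a, a+1)` is a separated pair (of either orientation). -/
def SepPair {n : ℕ} (σ : Equiv.Perm (Fin n)) (a : Fin n) : Prop :=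
  UpSepPair σ a ∨ DownSepPair σ a

/-- `σ` has no separated pairs. -/
def NoSepPairs {n : ℕ} (σ : Equiv.Perm (Fin n)) : Prop :=
  ∀ a : Fin n, ¬ SepPair σ a

/-- `f` lists the lower values of an increasing sequence of separated pairs in `σ` with
alternating orientations; the first pair is down oriented iff `firstDown = true`. -/
def AltChain {n : ℕ} (σ : Equiv.Perm (Fin n)) (firstDown : Bool) {t : ℕ}
    (f : Fin t → Fin n) : Prop :=
  StrictMono f ∧ ∀ j : Fin t,
    if ((j : ℕ) % 2 = 0) ↔ (firstDown = true) then DownSepPair σ (f j)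
    else UpSepPair σ (f j)

/-- The rev-tier of `σ`: the maximal length of an increasing sequence of separated pairs
with alternating orientations beginning with a down oriented pair. -/
noncomputable def revTier {n : ℕ} (σ : Equiv.Perm (Fin n)) : ℕ :=
  sSup {t : ℕ | ∃ f : Fin t → Fin n, AltChain σ true f}

/-- Maximal length of an increasing alternating sequence of separated pairs (either
starting orientation). -/
noncomputable def maxAltLen {n : ℕ} (σ : Equiv.Perm (Fin n)) : ℕ :=
  sSup {t : ℕ | ∃ b : Bool, ∃ f : Fin t → Fin n, AltChain σ b f}

/-- `σ` has a separated pair and every maximum-length increasing alternating sequence of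
separated pairs begins with an up oriented pair. -/
def UpOriented {n : ℕ} (σ : Equiv.Perm (Fin n)) : Prop :=
  1 ≤ maxAltLen σ ∧ ¬ ∃ f : Fin (maxAltLen σ) → Fin n, AltChain σ true f

/-- `σ` has a separated pair and every maximum-length increasing alternating sequence of
separated pairs begins with a down oriented pair. -/
def DownOriented {n : ℕ} (σ : Equiv.Perm (Fin n)) : Prop :=
  1 ≤ maxAltLen σ ∧ ¬ ∃ f : Fin (maxAltLen σ) → Fin n, AltChain σ false f

/-- `σ` is a basis element of the class of permutations of rev-tier at most `t`. -/
def IsBasisElt (t : ℕ) {n : ℕ} (σ : Equiv.Perm (Fin n)) : Prop :=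
  t + 1 ≤ revTier σ ∧
  ∀ (m : ℕ) (τ : Equiv.Perm (Fin m)), m < n → Pattern.Contains σ τ → revTier τ ≤ t

/-- The entry `1` of `σ` is in (1-indexed) position `k`. -/
def onePos {n : ℕ} (σ : Equiv.Perm (Fin n)) (k : ℕ) : Prop :=
  ∀ h : 0 < n, (σ.symm ⟨0, h⟩ : ℕ) + 1 = k

/-- `η(n,k)`: number of permutations of length `n` with no separated pairs and entry `1`
in position `k`. -/
noncomputable def eta (n k : ℕ) : ℕ :=
  Nat.card {σ : Equiv.Perm (Fin n) // NoSepPairs σ ∧ onePos σ k}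

/-- `η(n)`: number of permutations of length `n` with no separated pairs. -/
noncomputable def etaTot (n : ℕ) : ℕ :=
  Nat.card {σ : Equiv.Perm (Fin n) // NoSepPairs σ}

/-- `μ_U(n,t,k)`: number of up-oriented permutations of length `n`, rev-tier `t`, with
entry `1` in position `k`. -/
noncomputable def muU (n t k : ℕ) : ℕ :=
  Nat.card {σ : Equiv.Perm (Fin n) // UpOriented σ ∧ revTier σ = t ∧ onePos σ k}

/-- `μ_D(n,t,k)`: number of down-oriented permutations of length `n`, rev-tier `t`, with
entry `1` in position `k`. -/
noncomputable def muD (n t k : ℕ) : ℕ :=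
  Nat.card {σ : Equiv.Perm (Fin n) // DownOriented σ ∧ revTier σ = t ∧ onePos σ k}

/-- `π` is a down-up alternating permutation: `π₁ > π₂ < π₃ > ⋯`. -/
def DownUp {n : ℕ} (π : Equiv.Perm (Fin n)) : Prop :=
  ∀ (i : ℕ) (h : i + 1 < n),
    if i % 2 = 0 then π ⟨i + 1, h⟩ < π ⟨i, by omega⟩
    else π ⟨i, by omega⟩ < π ⟨i + 1, h⟩

/-- The Entringer number `E_{n,k}`: down-up alternating permutations of length `n` whose
first entry is `k` (1-indexed value). -/
noncomputable def entringer (n k : ℕ) : ℕ :=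
  Nat.card {π : Equiv.Perm (Fin n) // DownUp π ∧ ∀ h : 0 < n, (π ⟨0, h⟩ : ℕ) + 1 = k}

/-- The reversal of a permutation: `(revP σ) j = σ (n + 1 - j)`. -/
def revP {n : ℕ} (σ : Equiv.Perm (Fin n)) : Equiv.Perm (Fin n) :=
  (Fin.revPerm).trans σ

/-- The explicit maximal rev-tier permutation of length `n` (0-indexed values):
the even entries of `{1,…,n}` in decreasing order, then `n`, then the odd entries in
increasing order. -/
def maxPermVal (n : ℕ) (i : Fin n) : Fin n :=
  if h1 : (i : ℕ) < (n - 1) / 2 then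
    ⟨2 * ((n - 1) / 2) - 2 * (i : ℕ) - 1, by omega⟩
  else if h2 : (i : ℕ) = (n - 1) / 2 then
    ⟨n - 1, by have := i.isLt; omega⟩
  else
    ⟨2 * ((i : ℕ) - (n - 1) / 2 - 1), by have := i.isLt; omega⟩

def p231 : Equiv.Perm (Fin 3) :=
  ⟨![1, 2, 0], ![2, 0, 1], by decide, by decide⟩

def p132 : Equiv.Perm (Fin 3) :=
  ⟨![0, 2, 1], ![0, 2, 1], by decide, by decide⟩

def p2413 : Equiv.Perm (Fin 4) :=
  ⟨![1, 3, 0, 2], ![2, 0, 3, 1], by decide, by decide⟩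

def p2431 : Equiv.Perm (Fin 4) :=
  ⟨![1, 3, 2, 0], ![3, 0, 2, 1], by decide, by decide⟩

def p23154 : Equiv.Perm (Fin 5) :=
  ⟨![1, 2, 0, 4, 3], ![2, 0, 1, 4, 3], by decide, by decide⟩

def p24153 : Equiv.Perm (Fin 5) :=
  ⟨![1, 3, 0, 4, 2], ![2, 0, 4, 1, 3], by decide, by decide⟩

def p24513 : Equiv.Perm (Fin 5) :=
  ⟨![1, 3, 4, 0, 2], ![3, 0, 4, 1, 2], by decide, by decide⟩

def p24531 : Equiv.Perm (Fin 5) :=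
  ⟨![1, 3, 4, 2, 0], ![4, 0, 3, 1, 2], by decide, by decide⟩

def p42513 : Equiv.Perm (Fin 5) :=
  ⟨![3, 1, 4, 0, 2], ![3, 1, 4, 0, 2], by decide, by decide⟩

def p42531 : Equiv.Perm (Fin 5) :=
  ⟨![3, 1, 4, 2, 0], ![4, 1, 3, 0, 2], by decide, by decide⟩

def p231564 : Equiv.Perm (Fin 6) :=
  ⟨![1, 2, 0, 4, 5, 3], ![2, 0, 1, 5, 3, 4], by decide, by decide⟩

def p261453 : Equiv.Perm (Fin 6) :=
  ⟨![1, 5, 0, 3, 4, 2], ![2, 0, 5, 3, 4, 1], by decide, by decide⟩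

def p523164 : Equiv.Perm (Fin 6) :=
  ⟨![4, 1, 2, 0, 5, 3], ![3, 1, 2, 5, 0, 4], by decide, by decide⟩

def p562413 : Equiv.Perm (Fin 6) :=
  ⟨![4, 5, 1, 3, 0, 2], ![4, 2, 5, 3, 0, 1], by decide, by decide⟩

def p562431 : Equiv.Perm (Fin 6) :=
  ⟨![4, 5, 1, 3, 2, 0], ![5, 2, 4, 3, 0, 1], by decide, by decide⟩

def p6723154 : Equiv.Perm (Fin 7) :=
  ⟨![5, 6, 1, 2, 0, 4, 3], ![4, 2, 3, 6, 5, 0, 1], by decide, by decide⟩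

def p4321 : Equiv.Perm (Fin 4) :=
  ⟨![3, 2, 1, 0], ![3, 2, 1, 0], by decide, by decide⟩

def p4213 : Equiv.Perm (Fin 4) :=
  ⟨![3, 1, 0, 2], ![2, 1, 3, 0], by decide, by decide⟩

/-!
The idea is to describe rev-tier at least 3 by a condition that survives deleting entries and then
to list its minimal instances.

Say that the positions `x < y` are *separated* if an entry between them exceeds both of theirs.
If `x` and `y` are separated with values `v < w` (in either order), walk through the values
`v, v + 1, …, w`: at some step the position jumps over the separating entry, which gives a
separated pair of consecutive values inside `[v, w]`. So consecutive values may be replaced by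
arbitrary ones. Moreover, two oppositely oriented separated pairs, one with values below the
other, can be rechosen to share their middle entry. A chain of down, up and down oriented separated
pairs thus collapses to four entries with values `a < b < c < d` in which `b` is separated from a
later `a` and from a later `c`, and `d` from a later `c`: a zigzag.

The entries of a zigzag occur in one of the orders `badc`, `bdac`, `bdca`, `dbac`, `dbca`, and
comparing the separating entries with the others leaves exactly the eleven patterns. That each
of them has a zigzag, and none after the deletion of an entry, is a finite check.
-/

/-! ### Alternating chains and rev-tier -/

section RevTier

variable {n s t : ℕ} {σ : Equiv.Perm (Fin n)} {firstDown : Bool} {f : Fin t → Fin n}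

theorem AltChain.length_le (hf : AltChain σ firstDown f) : t ≤ n := by
  simpa using Fintype.card_le_of_injective f hf.1.injective

theorem AltChain.comp_castLE (hf : AltChain σ firstDown f) (hst : s ≤ t) :
    AltChain σ firstDown (f ∘ Fin.castLE hst) :=
  ⟨hf.1.comp (Fin.strictMono_castLE hst), fun j => hf.2 (Fin.castLE hst j)⟩

theorem le_revTier_iff : t ≤ revTier σ ↔ ∃ f : Fin t → Fin n, AltChain σ true f := by
  have bdd : BddAbove {t : ℕ | ∃ f : Fin t → Fin n, AltChain σ true f} :=
    ⟨n, fun _ ⟨_, hf⟩ => hf.length_le⟩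
  refine ⟨fun ht => ?_, fun hf => le_csSup bdd hf⟩
  have nonempty : {t : ℕ | ∃ f : Fin t → Fin n, AltChain σ true f}.Nonempty :=
    ⟨0, Fin.elim0, fun i => i.elim0, fun i => i.elim0⟩
  obtain ⟨f, hf⟩ := Nat.sSup_mem nonempty bdd
  exact ⟨_, hf.comp_castLE ht⟩

theorem three_le_revTier_iff :
    3 ≤ revTier σ ↔ ∃ a b c : Fin n, a < b ∧ b < c ∧
      DownSepPair σ a ∧ UpSepPair σ b ∧ DownSepPair σ c := by
  rw [le_revTier_iff, ← FinVec.exists_iff]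
  simp [FinVec.Exists, AltChain, Fin.forall_fin_succ, and_assoc]

end RevTier

/-! ### Separated positions -/

section Separated

variable {α β γ δ : Type*}

/-- The position `x` precedes the position `y` in the word `f`, and some entry strictly between
them exceeds the entries at both. Unlike in `UpSepPair` and `DownSepPair`, the two entries need not
be consecutive. -/
def Separated [LT α] [LT β] (f : α → β) (x y : α) : Prop :=
  ∃ z, x < z ∧ z < y ∧ f x < f z ∧ f y < f z

instance [LT α] [LT β] [DecidableLT α] [DecidableLT β] [Fintype α] (f : α → β) (x y : α) :
    Decidable (Separated f x y) :=
  inferInstanceAs (Decidable (∃ _, _))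

theorem Separated.map [Preorder α] [LT β] [Preorder γ] [LT δ] {f : α → β} {g : γ → δ} {e : α → γ}
    (he : StrictMono e) (hfg : ∀ i j, f i < f j → g (e i) < g (e j)) {x y : α} :
    Separated f x y → Separated g (e x) (e y) :=
  fun ⟨z, hxz, hzy, hx, hy⟩ => ⟨e z, he hxz, he hzy, hfg _ _ hx, hfg _ _ hy⟩

theorem separated_comp_ofDual [LT α] [LT β] {f : α → β} {x y : αᵒᵈ} :
    Separated (f ∘ OrderDual.ofDual) x y ↔
      Separated f (OrderDual.ofDual y) (OrderDual.ofDual x) :=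
  ⟨fun ⟨z, hxz, hzy, hx, hy⟩ => ⟨z.ofDual, hzy, hxz, hy, hx⟩,
    fun ⟨z, hyz, hzx, hy, hx⟩ => ⟨.toDual z, hzx, hyz, hx, hy⟩⟩

theorem Separated.exists_shared_left [LinearOrder α] [Preorder β] {f : α → β} {v w v' w' : α}
    (h : Separated f w v) (h' : Separated f v' w')
    (hvw : f v < f w) (hwv' : f w ≤ f v') (hvw' : f v' < f w') :
    ∃ b, f v < f b ∧ f b < f w' ∧ Separated f b v ∧ Separated f b w' := by
  obtain ⟨z', hvz', hzw', hfv', hfw'⟩ := h'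
  obtain hwz | hzw := lt_or_ge w z'
  · exact ⟨w, hvw, hwv'.trans_lt hvw', h, z', hwz, hzw', hwv'.trans_lt hfv', hfw'⟩
  · obtain ⟨z, hwz, hzv, -, -⟩ := h
    have hzv' : z' < v := hzw.trans_lt (hwz.trans hzv)
    exact ⟨v', hvw.trans_le hwv', hvw', ⟨z', hvz', hzv', hfv', (hvw.trans_le hwv').trans hfv'⟩,
      z', hvz', hzw', hfv', hfw'⟩

theorem Separated.exists_shared_right [LinearOrder α] [Preorder β] {f : α → β} {v w v' w' : α}
    (h : Separated f v w) (h' : Separated f w' v')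
    (hvw : f v < f w) (hwv' : f w ≤ f v') (hvw' : f v' < f w') :
    ∃ b, f v < f b ∧ f b < f w' ∧ Separated f v b ∧ Separated f w' b := by
  obtain ⟨b, hvb, hbw', hb, hb'⟩ := Separated.exists_shared_left (f := f ∘ OrderDual.ofDual)
    (v := .toDual v) (w := .toDual w) (v' := .toDual v') (w' := .toDual w')
    (separated_comp_ofDual.2 h) (separated_comp_ofDual.2 h') hvw hwv' hvw'
  exact ⟨b.ofDual, hvb, hbw', separated_comp_ofDual.1 hb, separated_comp_ofDual.1 hb'⟩

end Separated

section Consecutive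

variable {n : ℕ} {σ : Equiv.Perm (Fin n)} {a : Fin n}

theorem upSepPair_iff_separated :
    UpSepPair σ a ↔ ∃ hb : (a : ℕ) + 1 < n, Separated σ (σ.symm a) (σ.symm ⟨a + 1, hb⟩) := by
  refine exists_congr fun hb => ⟨?_, ?_⟩
  · rintro ⟨-, z, haz, hzb, hz⟩
    refine ⟨z, haz, hzb, ?_, ?_⟩ <;> simp only [Equiv.apply_symm_apply, Fin.lt_def] <;> omega
  · rintro ⟨z, haz, hzb, -, hz⟩
    exact ⟨haz.trans hzb, z, haz, hzb, by simpa [Fin.lt_def] using hz⟩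

theorem downSepPair_iff_separated :
    DownSepPair σ a ↔ ∃ hb : (a : ℕ) + 1 < n, Separated σ (σ.symm ⟨a + 1, hb⟩) (σ.symm a) := by
  refine exists_congr fun hb => ⟨?_, ?_⟩
  · rintro ⟨-, z, hbz, hza, hz⟩
    refine ⟨z, hbz, hza, ?_, ?_⟩ <;> simp only [Equiv.apply_symm_apply, Fin.lt_def] <;> omega
  · rintro ⟨z, hbz, hza, hz, -⟩
    exact ⟨hbz.trans hza, z, hbz, hza, by simpa [Fin.lt_def] using hz⟩

theorem exists_not_and_succ_of_le {P : ℕ → Prop} {m k : ℕ} (hmk : m ≤ k) (hm : ¬ P m)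
    (hk : P k) : ∃ u, m ≤ u ∧ u < k ∧ ¬ P u ∧ P (u + 1) := by
  induction k, hmk using Nat.le_induction with
  | base => exact absurd hk hm
  | succ k hmk ih =>
    by_cases hPk : P k
    · obtain ⟨u, hmu, huk, hu⟩ := ih hPk
      exact ⟨u, hmu, by omega, hu⟩
    · exact ⟨k, hmk, by omega, hPk, hk⟩

-- Stated for an arbitrary linear order of positions so that it also applies to the reversed order.
theorem exists_consecutive_separated {α : Type*} [LinearOrder α] (e : α ≃ Fin n) {x y : α}
    (hxy : e x < e y) (h : Separated e x y) :
    ∃ u : Fin n, e x ≤ u ∧ u < e y ∧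
      ∃ hu : (u : ℕ) + 1 < n, Separated e (e.symm u) (e.symm ⟨u + 1, hu⟩) := by
  obtain ⟨z, hxz, hzy, -, hyz⟩ := h
  obtain ⟨u, hxu, huy, hu, hu_succ, hz_succ⟩ :=
    exists_not_and_succ_of_le (P := fun v => ∃ hv : v < n, z < e.symm ⟨v, hv⟩)
      (Fin.le_def.1 hxy.le) (by simpa using hxz.le) (by simpa using hzy)
  have hun : u < n := by omega
  have hu_val : (⟨u, hun⟩ : Fin n) < e z := hyz.trans' huy
  have hu_succ_val : (⟨u + 1, hu_succ⟩ : Fin n) < e z := hyz.trans_le' huy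
  have hz : e.symm ⟨u, hun⟩ < z := by
    refine lt_of_le_of_ne (not_lt.1 fun h => hu ⟨hun, h⟩) ?_
    rintro rfl
    simp at hu_val
  exact ⟨⟨u, hun⟩, hxu, huy, hu_succ, z, hz, hz_succ, by simpa using hu_val,
    by simpa using hu_succ_val⟩

theorem Separated.exists_upSepPair {x y : Fin n} (h : Separated σ x y) (hxy : σ x < σ y) :
    ∃ u, σ x ≤ u ∧ u < σ y ∧ UpSepPair σ u := by
  simpa only [upSepPair_iff_separated] using exists_consecutive_separated σ hxy h

theorem Separated.exists_downSepPair {x y : Fin n} (h : Separated σ x y) (hyx : σ y < σ x) :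
    ∃ u, σ y ≤ u ∧ u < σ x ∧ DownSepPair σ u := by
  obtain ⟨u, hyu, hux, hu, hsep⟩ := exists_consecutive_separated (OrderDual.ofDual.trans σ)
    (x := .toDual y) (y := .toDual x) hyx (separated_comp_ofDual.2 h)
  exact ⟨u, hyu, hux, downSepPair_iff_separated.2 ⟨hu, separated_comp_ofDual.1 hsep⟩⟩

end Consecutive

/-! ### Zigzags -/

section Zigzag

variable {α β γ δ : Type*}

/-- The word `f` has four entries with values `f a < f b < f c < f d` such that the pairs `b, a` and
`b, c` and `d, c` are separated in these orders. The conditions on each position directly follow its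
quantifier, so that deciding the statement does not run through all quadruples. -/
def HasZigzag [LT α] [LT β] (f : α → β) : Prop :=
  ∃ b a, f a < f b ∧ Separated f b a ∧
    ∃ c, f b < f c ∧ Separated f b c ∧ ∃ d, f c < f d ∧ Separated f d c

instance [LT α] [LT β] [DecidableLT α] [DecidableLT β] [Fintype α] (f : α → β) :
    Decidable (HasZigzag f) :=
  inferInstanceAs (Decidable (∃ _, _))

theorem HasZigzag.map [Preorder α] [LT β] [Preorder γ] [LT δ] {f : α → β} {g : γ → δ} {e : α → γ}
    (he : StrictMono e) (hfg : ∀ i j, f i < f j → g (e i) < g (e j)) :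
    HasZigzag f → HasZigzag g := by
  rintro ⟨b, a, hab, hba, c, hbc, hbc', d, hcd, hdc⟩
  exact ⟨e b, e a, hfg _ _ hab, hba.map he hfg, e c, hfg _ _ hbc, hbc'.map he hfg,
    e d, hfg _ _ hcd, hdc.map he hfg⟩

theorem three_le_revTier_iff_hasZigzag {n : ℕ} {σ : Equiv.Perm (Fin n)} :
    3 ≤ revTier σ ↔ HasZigzag σ := by
  rw [three_le_revTier_iff]
  constructor
  · simp only [downSepPair_iff_separated, upSepPair_iff_separated]
    rintro ⟨v₁, v₂, v₃, h₁₂, h₂₃, ⟨hn₁, h₁⟩, ⟨hn₂, h₂⟩, ⟨hn₃, h₃⟩⟩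
    obtain ⟨b, hab, hbw, hba, hbw'⟩ := h₁.exists_shared_left h₂ (by simp [Fin.lt_def])
      (by simpa [Fin.le_def] using h₁₂) (by simp [Fin.lt_def])
    obtain ⟨c, hbc, hcd, hbc', hdc⟩ := hbw'.exists_shared_right h₃ hbw
      (by simpa [Fin.le_def] using h₂₃) (by simp [Fin.lt_def])
    exact ⟨b, _, hab, hba, c, hbc, hbc', _, hcd, hdc⟩
  · rintro ⟨b, a, hab, hba, c, hbc, hbc', d, hcd, hdc⟩
    obtain ⟨u, -, hub, hu⟩ := hba.exists_downSepPair hab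
    obtain ⟨v, hbv, hvc, hv⟩ := hbc'.exists_upSepPair hbc
    obtain ⟨w, hcw, -, hw⟩ := hdc.exists_downSepPair hcd
    exact ⟨u, v, w, hub.trans_le hbv, hvc.trans_le hcw, hu, hv, hw⟩

end Zigzag

/-! ### The eleven patterns -/

section Basis

variable {n k : ℕ} {σ : Equiv.Perm (Fin n)} {τ : Equiv.Perm (Fin k)}

/-- The eleven permutations of the paper's basis `B₂`, bundled with their lengths. -/
def basisTwo : List (Σ k, Equiv.Perm (Fin k)) :=
  [⟨5, p24153⟩, ⟨5, p24513⟩, ⟨5, p24531⟩, ⟨5, p42513⟩, ⟨5, p42531⟩, ⟨6, p231564⟩,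
   ⟨6, p261453⟩, ⟨6, p523164⟩, ⟨6, p562413⟩, ⟨6, p562431⟩, ⟨7, p6723154⟩]

theorem hasZigzag_of_mem_basisTwo : ∀ τ ∈ basisTwo, HasZigzag τ.2 := by
  decide

theorem not_hasZigzag_delete_of_mem_basisTwo :
    ∀ τ ∈ basisTwo, ∀ k, ¬ HasZigzag fun x : {x // x ≠ k} => τ.2 x.1 := by
  decide

theorem Pattern.Contains.hasZigzag (h : Pattern.Contains σ τ) (hτ : HasZigzag τ) :
    HasZigzag σ := by
  obtain ⟨e, he, hv⟩ := h
  exact hτ.map he fun i j => (hv i j).2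

theorem isBasisElt_two_of_hasZigzag (h : HasZigzag τ)
    (h_delete : ∀ k, ¬ HasZigzag fun x : {x // x ≠ k} => τ x.1) : IsBasisElt 2 τ := by
  refine ⟨three_le_revTier_iff_hasZigzag.2 h, fun m ρ hm ⟨e, he, hv⟩ => ?_⟩
  by_contra! hρ
  obtain ⟨k, hk⟩ : ∃ k, ∀ i, e i ≠ k := by
    have not_surjective : ¬ e.Surjective := fun h_surj =>
      hm.not_ge (by simpa using Fintype.card_le_of_surjective e h_surj)
    simpa [Function.Surjective] using not_surjective
  exact h_delete k <| (three_le_revTier_iff_hasZigzag.1 hρ).map (e := fun i => ⟨e i, hk i⟩)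
    (fun _ _ hij => he hij) fun i j => (hv i j).2

theorem contains_of_strictMono (x : Fin k → Fin n) (hx : StrictMono x)
    (hσ : StrictMono (σ ∘ x ∘ τ.symm)) : Pattern.Contains σ τ :=
  ⟨x, hx, fun i j => by simpa using hσ.lt_iff_lt (a := τ i) (b := τ j)⟩

/-- `σ` contains one of the eleven permutations of the basis `B₂`. -/
def ContainsBasisTwo (σ : Equiv.Perm (Fin n)) : Prop :=
  ∃ τ ∈ basisTwo, Pattern.Contains σ τ.2

-- `x` lists the positions of the occurrence from left to right and `y` lists them by increasing
-- value; both orders are then read off from the hypotheses in scope.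
theorem containsBasisTwo_of_occurrence (τ : Equiv.Perm (Fin k)) (x y : Fin k → Fin n)
    (hτ : ⟨k, τ⟩ ∈ basisTwo := by simp [basisTwo])
    (hxy : x ∘ τ.symm = y := by exact (FinVec.etaExpand_eq _).symm)
    (hx : StrictMono x := by simp; grind)
    (hσ : StrictMono (σ ∘ y) := by
      simp [Fin.strictMono_iff_lt_succ, Fin.forall_fin_succ]; grind) : ContainsBasisTwo σ :=
  ⟨⟨k, τ⟩, hτ, contains_of_strictMono x hx (by rwa [← hxy] at hσ)⟩

variable {a b c d : Fin n}

theorem containsBasisTwo_of_order_badc (hab : σ a < σ b) (hbc : σ b < σ c) (hcd : σ c < σ d)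
    (had : a < d) (hba : Separated σ b a) (hdc : Separated σ d c) : ContainsBasisTwo σ := by
  obtain ⟨x, hbx, hxa, hσbx, -⟩ := hba
  obtain ⟨z, hdz, hzc, hσdz, -⟩ := hdc
  obtain hσxc | hσcx := (σ.injective.ne (show x ≠ c by order)).lt_or_gt
  · exact containsBasisTwo_of_occurrence p231564 ![b, x, a, d, z, c] ![a, b, x, c, d, z]
  obtain hσxz | hσzx := (σ.injective.ne (show x ≠ z by order)).lt_or_gt
  · exact containsBasisTwo_of_occurrence p24153 ![b, x, a, z, c] ![a, b, c, x, z]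
  · exact containsBasisTwo_of_occurrence p261453 ![b, x, a, d, z, c] ![a, b, c, d, z, x]

theorem containsBasisTwo_of_order_bdac (hab : σ a < σ b) (hbc : σ b < σ c) (hcd : σ c < σ d)
    (hbd : b < d) (hda : d < a) (hac : a < c) (hdc : Separated σ d c) : ContainsBasisTwo σ := by
  obtain ⟨z, hdz, hzc, hσdz, -⟩ := hdc
  obtain haz | hza := (ne_of_apply_ne σ (show σ a ≠ σ z by order)).lt_or_gt
  · exact containsBasisTwo_of_occurrence p24153 ![b, d, a, z, c] ![a, b, c, d, z]
  · exact containsBasisTwo_of_occurrence p24513 ![b, d, z, a, c] ![a, b, c, d, z]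

theorem containsBasisTwo_of_order_bdca (hab : σ a < σ b) (hbc : σ b < σ c) (hcd : σ c < σ d)
    (hbd : b < d) (hca : c < a) (hdc : Separated σ d c) : ContainsBasisTwo σ := by
  obtain ⟨z, hdz, hzc, hσdz, -⟩ := hdc
  exact containsBasisTwo_of_occurrence p24531 ![b, d, z, c, a] ![a, b, c, d, z]

theorem containsBasisTwo_of_order_dbtac {t : Fin n} (hab : σ a < σ b) (hbc : σ b < σ c)
    (hcd : σ c < σ d) (hct : σ c < σ t) (hdb : d < b) (hbt : b < t) (hta : t < a) (hac : a < c)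
    (hdc : Separated σ d c) : ContainsBasisTwo σ := by
  obtain ⟨z, hdz, hzc, hσdz, -⟩ := hdc
  obtain hσdt | hσtd := (σ.injective.ne (show d ≠ t by order)).lt_or_gt
  · exact containsBasisTwo_of_occurrence p42513 ![d, b, t, a, c] ![a, b, c, d, t]
  obtain haz | hza := (ne_of_apply_ne σ (show σ a ≠ σ z by order)).lt_or_gt
  · exact containsBasisTwo_of_occurrence p24153 ![b, t, a, z, c] ![a, b, c, t, z]
  obtain hbz | hzb := (ne_of_apply_ne σ (show σ b ≠ σ z by order)).lt_or_gt
  · exact containsBasisTwo_of_occurrence p42513 ![d, b, z, a, c] ![a, b, c, d, z]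
  · exact containsBasisTwo_of_occurrence p562413 ![d, z, b, t, a, c] ![a, b, c, t, d, z]

theorem containsBasisTwo_of_order_dbac (hab : σ a < σ b) (hbc : σ b < σ c) (hcd : σ c < σ d)
    (hdb : d < b) (hac : a < c) (hba : Separated σ b a) (hbc' : Separated σ b c)
    (hdc : Separated σ d c) : ContainsBasisTwo σ := by
  obtain ⟨x, hbx, hxa, hσbx, -⟩ := hba
  obtain ⟨y, hby, hyc, -, hσcy⟩ := hbc'
  have ⟨z, hdz, hzc, hσdz, _⟩ := hdc
  obtain hσcx | hσxc := (σ.injective.ne (show c ≠ x by order)).lt_or_gt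
  · exact containsBasisTwo_of_order_dbtac hab hbc hcd hσcx hdb hbx hxa hac hdc
  obtain haz | hza := (ne_of_apply_ne σ (show σ a ≠ σ z by order)).lt_or_gt
  · exact containsBasisTwo_of_occurrence p523164 ![d, b, x, a, z, c] ![a, b, x, c, d, z]
  obtain hbz | hzb := (ne_of_apply_ne σ (show σ b ≠ σ z by order)).lt_or_gt
  · exact containsBasisTwo_of_order_dbtac hab hbc hcd (hcd.trans hσdz) hdb hbz hza hac hdc
  obtain hya | hay := (ne_of_apply_ne σ (show σ y ≠ σ a by order)).lt_or_gt
  · exact containsBasisTwo_of_order_dbtac hab hbc hcd hσcy hdb hby hya hac hdc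
  obtain hσdy | hσyd := (σ.injective.ne (show d ≠ y by order)).lt_or_gt
  · exact containsBasisTwo_of_occurrence p523164 ![d, b, x, a, y, c] ![a, b, x, c, d, y]
  · exact containsBasisTwo_of_occurrence p6723154 ![d, z, b, x, a, y, c] ![a, b, x, c, y, d, z]

theorem containsBasisTwo_of_order_dbca (hab : σ a < σ b) (hbc : σ b < σ c) (hcd : σ c < σ d)
    (hdb : d < b) (hca : c < a) (hbc' : Separated σ b c) (hdc : Separated σ d c) :
    ContainsBasisTwo σ := by
  obtain ⟨y, hby, hyc, -, hσcy⟩ := hbc'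
  obtain ⟨z, hdz, hzc, hσdz, -⟩ := hdc
  obtain hσdy | hσyd := (σ.injective.ne (show d ≠ y by order)).lt_or_gt
  · exact containsBasisTwo_of_occurrence p42531 ![d, b, y, c, a] ![a, b, c, d, y]
  obtain hbz | hzb := (ne_of_apply_ne σ (show σ b ≠ σ z by order)).lt_or_gt
  · exact containsBasisTwo_of_occurrence p42531 ![d, b, z, c, a] ![a, b, c, d, z]
  · exact containsBasisTwo_of_occurrence p562431 ![d, z, b, y, c, a] ![a, b, c, y, d, z]

theorem HasZigzag.containsBasisTwo (h : HasZigzag σ) : ContainsBasisTwo σ := by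
  obtain ⟨b, a, hab, hba, c, hbc, hbc', d, hcd, hdc⟩ := h
  obtain hac | hca := (ne_of_apply_ne σ (hab.trans hbc).ne).lt_or_gt <;>
  obtain hbd | hdb := (ne_of_apply_ne σ (hbc.trans hcd).ne).lt_or_gt
  · obtain had | hda := (ne_of_apply_ne σ ((hab.trans hbc).trans hcd).ne).lt_or_gt
    · exact containsBasisTwo_of_order_badc hab hbc hcd had hba hdc
    · exact containsBasisTwo_of_order_bdac hab hbc hcd hbd hda hac hdc
  · exact containsBasisTwo_of_order_dbac hab hbc hcd hdb hac hba hbc' hdc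
  · exact containsBasisTwo_of_order_bdca hab hbc hcd hbd hca hdc
  · exact containsBasisTwo_of_order_dbca hab hbc hcd hdb hca hbc' hdc

theorem revTier_le_two_iff_forall_avoids :
    revTier σ ≤ 2 ↔ ∀ τ ∈ basisTwo, Pattern.Avoids σ τ.2 := by
  have three_le_iff : 3 ≤ revTier σ ↔ ContainsBasisTwo σ :=
    three_le_revTier_iff_hasZigzag.trans
      ⟨HasZigzag.containsBasisTwo,
        fun ⟨τ, hτ, hστ⟩ => hστ.hasZigzag (hasZigzag_of_mem_basisTwo τ hτ)⟩
  rw [← not_lt, Nat.lt_iff_add_one_le, three_le_iff]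
  simp only [ContainsBasisTwo, Pattern.Avoids, not_exists, not_and]

theorem isBasisElt_two_of_mem_basisTwo : ∀ τ ∈ basisTwo, IsBasisElt 2 τ.2 := fun τ hτ =>
  isBasisElt_two_of_hasZigzag (hasZigzag_of_mem_basisTwo τ hτ)
    (not_hasZigzag_delete_of_mem_basisTwo τ hτ)

end Basis

/-- rev-tier at most 2 iff avoiding the eleven listed permutations, which
form the basis `B₂` of the class of 3-reverse pass sortable permutations. -/
theorem revTier_le_two_iff :
    (∀ {n : ℕ} (σ : Equiv.Perm (Fin n)),
      revTier σ ≤ 2 ↔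
        (Pattern.Avoids σ p24153 ∧ Pattern.Avoids σ p24513 ∧ Pattern.Avoids σ p24531 ∧
         Pattern.Avoids σ p42513 ∧ Pattern.Avoids σ p42531 ∧ Pattern.Avoids σ p231564 ∧
         Pattern.Avoids σ p261453 ∧ Pattern.Avoids σ p523164 ∧ Pattern.Avoids σ p562413 ∧
         Pattern.Avoids σ p562431 ∧ Pattern.Avoids σ p6723154)) ∧
    (IsBasisElt 2 p24153 ∧ IsBasisElt 2 p24513 ∧ IsBasisElt 2 p24531 ∧
     IsBasisElt 2 p42513 ∧ IsBasisElt 2 p42531 ∧ IsBasisElt 2 p231564 ∧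
     IsBasisElt 2 p261453 ∧ IsBasisElt 2 p523164 ∧ IsBasisElt 2 p562413 ∧
     IsBasisElt 2 p562431 ∧ IsBasisElt 2 p6723154) := by
  exact ⟨fun σ => by simpa [basisTwo] using revTier_le_two_iff_forall_avoids (σ := σ),
    by simpa [basisTwo] using isBasisElt_two_of_mem_basisTwo⟩
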